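/- (At Most Two Outsiders) In the robot model on a line, assume the visibility graph at time 0 is connected. Then there exists a time t₀ such that for all t ≥ t₀: any two robots strictly to the left of 0 occupy the same position (for all i, j, if x t i < 0 and x t j < 0 then x t i = x t j), and any two robots strictly to the right of D occupy the same position (if x t i > D and x t j > D then x t i = x t j). In other words, after a finite number of steps at most one position is occupied on each side of the segment [0,D]. -/

import Mathlib

open Filter Topology

/-- Position of the farthest left robot visible from robot `i` at time `t`
(visibility radius `V`). -/
noncomputable def lpos {n : ℕ} (V : ℝ) (x : ℕ → Fin (n + 1) → ℝ)
    (t : ℕ) (i : Fin (n + 1)) : ℝ :=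
  sInf (x t '' {j | |x t j - x t i| ≤ V})

/-- Position of the farthest right robot visible from robot `i` at time `t`
(visibility radius `V`). -/
noncomputable def rpos {n : ℕ} (V : ℝ) (x : ℕ → Fin (n + 1) → ℝ)
    (t : ℕ) (i : Fin (n + 1)) : ℝ :=
  sSup (x t '' {j | |x t j - x t i| ≤ V})

/-- One robot update, with explicit witnesses for the extreme visible robots. -/
def Upd {ι : Type} (V : ℝ) (y : ι → ℝ) (i : ι) (z : ℝ) : Prop :=
  ∃ p q : ι, |y p - y i| ≤ V ∧ |y q - y i| ≤ V ∧
    (∀ j, |y j - y i| ≤ V → y p ≤ y j ∧ y j ≤ y q) ∧ z = (y p + y q) / 2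

lemma upd_mono {ι : Type} {V : ℝ} (hV : 0 < V) {y : ι → ℝ} {i j : ι} {z w : ℝ}
    (hi : Upd V y i z) (hj : Upd V y j w) (hij : y i ≤ y j) : z ≤ w := by
  obtain ⟨p, q, hp, hq, h, rfl⟩ := hi
  obtain ⟨p', q', hp', hq', h', rfl⟩ := hj
  have hii := h i (by simp [hV.le])
  have hjj := h' j (by simp [hV.le])
  rw [abs_le] at hp hq hp' hq'
  have h1 : y p ≤ y p' := by
    by_cases hc : |y p' - y i| ≤ V
    · exact (h _ hc).1
    · by_contra hlt
      apply hc
      rw [abs_le]; constructor <;> linarith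
  have h2 : y q ≤ y q' := by
    by_cases hc : |y q - y j| ≤ V
    · exact (h' _ hc).2
    · by_contra hlt
      apply hc
      rw [abs_le]; constructor <;> linarith
  linarith

lemma upd_edge {ι : Type} {V : ℝ} (hV : 0 < V) {y : ι → ℝ} {i j : ι} {z w : ℝ}
    (hi : z = y i ∨ Upd V y i z) (hj : w = y j ∨ Upd V y j w) (hij : y i ≤ y j)
    (he : y j ≤ y i + V) : |z - w| ≤ V := by
  have e1 : |y j - y i| ≤ V := by rw [abs_le]; constructor <;> linarith
  have e2 : |y i - y j| ≤ V := by rw [abs_le]; constructor <;> linarith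
  rcases hi with rfl | ⟨p, q, hp, hq, h, rfl⟩ <;> rcases hj with rfl | ⟨p', q', hp', hq', h', rfl⟩
  · exact e2
  · have a1 := h' i e2
    have a2 := h' j (by simp [hV.le])
    rw [abs_le] at *
    constructor <;> linarith
  · have a1 := h j e1
    have a2 := h i (by simp [hV.le])
    rw [abs_le] at *
    constructor <;> linarith
  · have a1 := h' i e2
    have a2 := h' j (by simp [hV.le])
    have a3 := h j e1
    have a4 := h i (by simp [hV.le])
    rw [abs_le] at *
    constructor <;> linarith

lemma left_side {n : ℕ} {V D : ℝ} (hV : 0 < V) (hD : 0 < D)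
    (x : ℕ → Fin (n + 1) → ℝ) (a b : Fin (n + 1))
    (ha : ∀ t, x t a = 0) (hb : ∀ t, x t b = D)
    (hupd : ∀ t i, i ≠ a → i ≠ b → Upd V (x t) i (x (t + 1) i))
    (hconn : ∀ i j, Relation.ReflTransGen (fun a b => |x 0 a - x 0 b| ≤ V) i j) :
    ∃ t₀ : ℕ, ∀ t : ℕ, t₀ ≤ t →
      ∀ i j : Fin (n + 1), x t i < 0 → x t j < 0 → x t i = x t j := by
  have hstep : ∀ t i, x (t + 1) i = x t i ∨ Upd V (x t) i (x (t + 1) i) := by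
    intro t i
    by_cases h1 : i = a
    · left; rw [h1, ha, ha]
    by_cases h2 : i = b
    · left; rw [h2, hb, hb]
    exact Or.inr (hupd t i h1 h2)
  have hedge1 : ∀ t i j, |x t i - x t j| ≤ V → |x (t + 1) i - x (t + 1) j| ≤ V := by
    intro t i j h
    rw [abs_le] at h
    rcases le_total (x t i) (x t j) with hle | hle
    · exact upd_edge hV (hstep t i) (hstep t j) hle (by linarith)
    · rw [abs_sub_comm]
      exact upd_edge hV (hstep t j) (hstep t i) hle (by linarith)
  have hedge : ∀ s i j, |x s i - x s j| ≤ V → ∀ t, s ≤ t → |x t i - x t j| ≤ V := by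
    intro s i j h t hst
    induction t, hst using Nat.le_induction with
    | base => exact h
    | succ t _ ih => exact hedge1 t i j ih
  have hneg_ne : ∀ t i, x t i < 0 → i ≠ a ∧ i ≠ b := by
    intro t i h
    constructor
    · rintro rfl; rw [ha] at h; exact lt_irrefl _ h
    · rintro rfl; rw [hb] at h; linarith
  by_cases hA : ∃ T, ∀ i, 0 ≤ x T i
  · obtain ⟨T, hT⟩ := hA
    refine ⟨T, fun t ht i j hi hj => ?_⟩
    exfalso
    have : ∀ i, 0 ≤ x t i := by
      clear hi hj
      induction t, ht using Nat.le_induction with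
      | base => exact hT
      | succ t _ ih =>
        intro i
        rcases hstep t i with h | ⟨p, q, _, _, _, h⟩
        · rw [h]; exact ih i
        · rw [h]; have := ih p; have := ih q; linarith
    linarith [this i]
  push Not at hA
  obtain ⟨i0, hi0⟩ := Finite.exists_min (x 0)
  have hi0neg0 : x 0 i0 < 0 := by
    obtain ⟨k, hk⟩ := hA 0
    exact (hi0 k).trans_lt hk
  obtain ⟨hia, hib⟩ := hneg_ne 0 i0 hi0neg0
  have hmin : ∀ t, x t i0 < 0 ∧ ∀ j, x t i0 ≤ x t j := by
    intro t
    induction t with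
    | zero => exact ⟨hi0neg0, hi0⟩
    | succ t ih =>
      have hnf : ∀ j, j ≠ a → j ≠ b → x (t + 1) i0 ≤ x (t + 1) j := fun j h1 h2 =>
        upd_mono hV (hupd t i0 hia hib) (hupd t j h1 h2) (ih.2 j)
      have hneg : x (t + 1) i0 < 0 := by
        obtain ⟨k, hk⟩ := hA (t + 1)
        obtain ⟨h1, h2⟩ := hneg_ne _ _ hk
        exact (hnf k h1 h2).trans_lt hk
      refine ⟨hneg, fun j => ?_⟩
      by_cases h1 : j = a
      · rw [h1, ha]; exact hneg.le
      by_cases h2 : j = b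
      · rw [h2, hb]; linarith
      exact hnf j h1 h2
  have hmono : Monotone (fun t => x t i0) := by
    apply monotone_nat_of_le_succ
    intro t
    obtain ⟨p, q, _, _, _, h⟩ := hupd t i0 hia hib
    have := (hmin t).2 p
    have := (hmin t).2 q
    simp only [h]; linarith
  obtain ⟨m, hm⟩ : ∃ m, Tendsto (fun t => x t i0) atTop (𝓝 m) :=
    ⟨_, tendsto_atTop_ciSup hmono ⟨0, by rintro _ ⟨t, rfl⟩; exact (hmin t).1.le⟩⟩
  have hm0 : m ≤ 0 := le_of_tendsto' hm (fun t => (hmin t).1.le)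
  have hclosed : ∀ i j, i ≠ a → i ≠ b → Tendsto (fun t => x t i) atTop (𝓝 m) →
      (∃ s, |x s i - x s j| ≤ V) → Tendsto (fun t => x t j) atTop (𝓝 m) := by
    rintro i j h1 h2 hi ⟨s, hs⟩
    have hup : Tendsto (fun t => 2 * x (t + 1) i - x t i0) atTop (𝓝 m) := by
      have := (((tendsto_add_atTop_iff_nat 1).2 hi).const_mul 2).sub hm
      convert this using 2
      ring
    refine tendsto_of_tendsto_of_tendsto_of_le_of_le' hm hup
      (Eventually.of_forall fun t => (hmin t).2 j) ?_
    filter_upwards [eventually_ge_atTop s] with t ht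
    have he := hedge s i j hs t ht
    rw [abs_sub_comm] at he
    obtain ⟨p, q, _, _, h, h'⟩ := hupd t i h1 h2
    have := (h j he).2
    have := (hmin t).2 p
    linarith
  have hbZ : ¬ Tendsto (fun t => x t b) atTop (𝓝 m) := by
    intro h
    simp only [hb] at h
    have := tendsto_nhds_unique h tendsto_const_nhds
    linarith
  have haZ : Tendsto (fun t => x t a) atTop (𝓝 m) := by
    by_contra hc
    apply hc
    have hpath : ∀ c, Relation.ReflTransGen (fun a b => |x 0 a - x 0 b| ≤ V) i0 c →
        Tendsto (fun t => x t c) atTop (𝓝 m) := ?_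
    · exact hpath a (hconn i0 a)
    intro c hpath
    induction hpath with
    | refl => exact hm
    | tail _ hyz ih =>
      refine hclosed _ _ ?_ ?_ ih ⟨0, hyz⟩
      · rintro rfl; exact hc ih
      · rintro rfl; exact hbZ ih
  have hm00 : m = 0 := by
    simp only [ha] at haZ
    exact tendsto_nhds_unique haZ tendsto_const_nhds |>.symm ▸ rfl
  subst hm00
  have hsmall : ∀ᶠ t in atTop, ∀ i, Tendsto (fun t => x t i) atTop (𝓝 0) → |x t i| ≤ V / 2 := by
    rw [eventually_all]
    intro i
    by_cases hi : Tendsto (fun t => x t i) atTop (𝓝 0)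
    · have h2 := hi.abs
      rw [abs_zero] at h2
      filter_upwards [h2.eventually_le_const (by linarith : (0:ℝ) < V / 2)] with t ht _
      exact ht
    · exact Eventually.of_forall fun t h => absurd h hi
  obtain ⟨T, hT⟩ := eventually_atTop.1 hsmall
  have hmerge : ∀ t, T ≤ t → ∀ i j, i ≠ a → i ≠ b → j ≠ a → j ≠ b →
      Tendsto (fun t => x t i) atTop (𝓝 0) → Tendsto (fun t => x t j) atTop (𝓝 0) →
      x (t + 1) i = x (t + 1) j := by
    intro t ht i j h1 h2 h3 h4 hi hj
    have key : ∀ i, i ≠ a → i ≠ b → Tendsto (fun t => x t i) atTop (𝓝 0) →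
        ∀ k, |x t k - x t i| ≤ V ↔ Tendsto (fun t => x t k) atTop (𝓝 0) := by
      intro i h1 h2 hi k
      constructor
      · intro h
        rw [abs_sub_comm] at h
        exact hclosed i k h1 h2 hi ⟨t, h⟩
      · intro h
        have e1 := abs_le.1 (hT t ht k h)
        have e2 := abs_le.1 (hT t ht i hi)
        rw [abs_le]; constructor <;> linarith
    obtain ⟨p, q, hp, hq, h, h'⟩ := hupd t i h1 h2
    obtain ⟨p', q', hp', hq', g, g'⟩ := hupd t j h3 h4
    rw [key i h1 h2 hi] at hp hq
    rw [key j h3 h4 hj] at hp' hq'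
    simp only [key i h1 h2 hi] at h
    simp only [key j h3 h4 hj] at g
    have := h _ hp'
    have := h _ hq'
    have := g _ hp
    have := g _ hq
    linarith
  refine ⟨T + 1, fun t ht i j hi hj => ?_⟩
  have hZ : ∀ i, x t i < 0 → Tendsto (fun t => x t i) atTop (𝓝 0) := by
    intro i hi
    refine hclosed i0 i hia hib hm ⟨t, ?_⟩
    have e1 := abs_le.1 (hT t (by omega) i0 hm)
    have e2 := (hmin t).2 i
    rw [abs_le]; constructor <;> linarith
  obtain ⟨s, rfl⟩ : ∃ s, t = s + 1 := ⟨t - 1, by omega⟩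
  exact hmerge s (by omega) i j (hneg_ne _ _ hi).1 (hneg_ne _ _ hi).2 (hneg_ne _ _ hj).1
    (hneg_ne _ _ hj).2 (hZ i hi) (hZ j hj)

/-- (At Most Two Outsiders) After a finite number of steps, at most one
position is occupied on each side of the segment `[0, D]`. -/
theorem at_most_two_outsiders
    (n : ℕ) (hn : 2 ≤ n) (V D : ℝ) (hV : 0 < V) (hD : 0 < D)
    (x : ℕ → Fin (n + 1) → ℝ)
    (hfault0 : ∀ t : ℕ, x t 0 = 0)
    (hfaultn : ∀ t : ℕ, x t (Fin.last n) = D)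
    (hupd : ∀ t : ℕ, ∀ i : Fin (n + 1), i ≠ 0 → i ≠ Fin.last n →
      x (t + 1) i = (lpos V x t i + rpos V x t i) / 2)
    (hconn : ∀ i j : Fin (n + 1),
      Relation.ReflTransGen (fun a b : Fin (n + 1) => |x 0 a - x 0 b| ≤ V) i j)
    : ∃ t₀ : ℕ, ∀ t : ℕ, t₀ ≤ t →
      (∀ i j : Fin (n + 1), x t i < 0 → x t j < 0 → x t i = x t j) ∧
      (∀ i j : Fin (n + 1), x t i > D → x t j > D → x t i = x t j) := by
  have hU : ∀ t i, i ≠ 0 → i ≠ Fin.last n → Upd V (x t) i (x (t + 1) i) := by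
    intro t i h1 h2
    have hne : (x t '' {j | |x t j - x t i| ≤ V}).Nonempty :=
      ⟨x t i, i, by simp [hV.le], rfl⟩
    have hfin : (x t '' {j | |x t j - x t i| ≤ V}).Finite := Set.toFinite _
    obtain ⟨p, hp, hp'⟩ := hne.csInf_mem hfin
    obtain ⟨q, hq, hq'⟩ := hne.csSup_mem hfin
    refine ⟨p, q, hp, hq, fun j hj => ⟨?_, ?_⟩, ?_⟩
    · rw [hp']; exact csInf_le hfin.bddBelow ⟨j, hj, rfl⟩
    · rw [hq']; exact le_csSup hfin.bddAbove ⟨j, hj, rfl⟩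
    · rw [hupd t i h1 h2, hp', hq']; rfl
  obtain ⟨t1, H1⟩ := left_side hV hD x 0 (Fin.last n) hfault0 hfaultn hU hconn
  obtain ⟨t2, H2⟩ := left_side hV hD (fun t i => D - x t i) (Fin.last n) 0
    (fun t => by simp [hfaultn]) (fun t => by simp [hfault0])
    (by
      intro t i h1 h2
      obtain ⟨p, q, hp, hq, h, h'⟩ := hU t i h2 h1
      have e : ∀ j, |D - x t j - (D - x t i)| = |x t j - x t i| := by
        intro j
        rw [abs_sub_comm (x t j)]
        congr 1; ring
      refine ⟨q, p, by simpa only [e] using hq, by simpa only [e] using hp, fun j hj => ?_, ?_⟩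
      · simp only [e] at hj
        have := h j hj
        constructor <;> linarith
      · simp only [h']; ring)
    (by
      have e : (fun a b : Fin (n + 1) => |D - x 0 a - (D - x 0 b)| ≤ V)
          = fun a b => |x 0 a - x 0 b| ≤ V := by
        funext a b
        rw [abs_sub_comm (x 0 a)]
        congr 2; ring
      intro i j
      rw [e]
      exact hconn i j)
  refine ⟨max t1 t2, fun t ht => ⟨H1 t (le_of_max_le_left ht), fun i j hi hj => ?_⟩⟩
  have := H2 t (le_of_max_le_right ht) i j (by linarith) (by linarith)
  linarith
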